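/- arXiv:2505.09520 — 3 statements merged into one kernel-verified Lean document; each statement's English description precedes it below -/
import Mathlib

section
/- Let (e_k^-)^κ denote the action of the antisymmetrizer e_k^- = (1/k!)∑_{σ∈S_k} sgn(σ)·σ on ℂ[Y_1,...,Y_k] via the Demazure-type action. Then for any polynomial f, ((e_k^-)^κ f)(Y_1,...,Y_k) = (1/k!) ∏_{i<j} ((Y_i − Y_j − κ)/(Y_i − Y_j)) · ∑_{σ∈S_k} sgn(σ) f(Y_{σ(1)},...,Y_{σ(k)}). -/
open MvPolynomial Finset

/-- The field of rational functions in the variables `Y 1, …, Y k` over `ℂ`. -/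
abbrev RatField (k : ℕ) : Type := FractionRing (MvPolynomial (Fin k) ℂ)

/-- The variable `Y i`, viewed in the field of rational functions. -/
noncomputable def Yv {k : ℕ} (i : Fin k) : RatField k :=
  algebraMap (MvPolynomial (Fin k) ℂ) (RatField k) (X i)

/-- The substitution `Y i ↦ Y (g i)` for a permutation `g`. -/
noncomputable def permMap {k : ℕ} (g : Equiv.Perm (Fin k)) :
    RatField k →+* RatField k :=
  IsFractionRing.lift
    (g := (algebraMap (MvPolynomial (Fin k) ℂ) (RatField k)).comp (rename g).toRingHom)
    (by
      exact (IsFractionRing.injective (MvPolynomial (Fin k) ℂ) (RatField k)).comp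
        (rename_injective _ g.injective))

/-- The Demazure-type operator `σ^κ_{ab} f = P_{ab} f + κ (f - P_{ab} f)/(Y a - Y b)`. -/
noncomputable def Dem {k : ℕ} (κ : ℂ) (a b : Fin k) (f : RatField k) : RatField k :=
  permMap (Equiv.swap a b) f +
    algebraMap (MvPolynomial (Fin k) ℂ) (RatField k) (C κ) *
      (f - permMap (Equiv.swap a b) f) / (Yv a - Yv b)

/-! Let `A = ∑ sgn(σ) ρ(σ)` and `E = ∑ sgn(σ) σ`, both linear over the field of symmetric
functions, and let `Δ_t = ∏_{i<j} (Y_i - Y_j - t)`.  In each rank-one case the symmetrizers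
`1 + ρ(s)` and `1 + s` have the same image, so `A s = -A` for every simple transposition `s`, and
therefore `A E = k! A`.  As `E x / Δ_0` is symmetric, this determines `A` up to the single value
`A Δ_0`:  `k! A x = (E x / Δ_0) A Δ_0`.

To find `A Δ_0`, evaluate at `Δ_κ`.  It is antisymmetric for the action `ρ`, so `A Δ_κ = k! Δ_κ`.
On the other hand `E` kills every polynomial of degree less than `k(k-1)/2`, so only the leading
part of `Δ_κ` contributes to `E Δ_κ`, which is therefore `k! Δ_0`.  Hence `A Δ_0 = k! Δ_κ`. -/

section Antisymmetrizer

open Equiv (Perm swap)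

section Pairs

/-- The pairs `i < j` indexing the factors of a Vandermonde product. -/
abbrev ltPairs (ι : Type*) [LinearOrder ι] [Fintype ι] : Finset (ι × ι) :=
  univ.filter fun q : ι × ι => q.1 < q.2

lemma card_ltPairs_fin (k : ℕ) : #(ltPairs (Fin k)) = ∑ i ∈ range k, i := by
  simp_rw [sum_range, card_filter, Fintype.sum_prod_type_right, ← card_filter,
    filter_gt_eq_Iio, Fin.card_Iio]

variable {ι : Type*} [LinearOrder ι]

lemma swap_lt_swap_of_covBy {a b c d : ι} (hab : a ⋖ b) (hcd : c < d)
    (hne : (c, d) ≠ (a, b)) : swap a b c < swap a b d := by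
  have hlt : a < b := hab.lt
  have hle : ∀ {x}, x < b → x ≤ a := hab.le_of_lt
  have hge : ∀ {x}, a < x → b ≤ x := hab.ge_of_gt
  simp only [ne_eq, Prod.mk.injEq] at hne
  simp only [Equiv.swap_apply_def]
  split_ifs <;> grind

lemma prod_ltPairs_swap_mul [Fintype ι] {M : Type*} [CommMonoid M] (f : ι → ι → M) {a b : ι}
    (hab : a ⋖ b) :
    (∏ q ∈ ltPairs ι, f (swap a b q.1) (swap a b q.2)) * f a b =
      (∏ q ∈ ltPairs ι, f q.1 q.2) * f b a := by
  have hmem : (a, b) ∈ ltPairs ι := (mem_filter_univ _).2 hab.lt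
  have hmaps : ∀ q ∈ (ltPairs ι).erase (a, b),
      (swap a b q.1, swap a b q.2) ∈ (ltPairs ι).erase (a, b) := by
    rintro ⟨c, d⟩ hcd
    simp only [mem_erase, mem_filter_univ] at hcd ⊢
    refine ⟨fun h => ?_, swap_lt_swap_of_covBy hab hcd.2 hcd.1⟩
    obtain ⟨rfl, rfl⟩ : c = b ∧ d = a := by simpa [Equiv.swap_apply_eq_iff] using h
    exact hcd.2.not_gt hab.lt
  have hrest : ∏ q ∈ (ltPairs ι).erase (a, b), f (swap a b q.1) (swap a b q.2) =
      ∏ q ∈ (ltPairs ι).erase (a, b), f q.1 q.2 :=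
    prod_nbij' (fun q => (swap a b q.1, swap a b q.2)) (fun q => (swap a b q.1, swap a b q.2))
      hmaps hmaps (by simp) (by simp) (by simp)
  rw [← mul_prod_erase _ _ hmem, ← mul_prod_erase (ltPairs ι) _ hmem, hrest,
    Equiv.swap_apply_left, Equiv.swap_apply_right]
  dsimp only
  ac_rfl

end Pairs

section SignedSum

lemma sign_smul_sign_smul {α M : Type*} [Fintype α] [DecidableEq α] [AddCommGroup M]
    (σ : Perm α) (x : M) : (σ.sign : ℤ) • (σ.sign : ℤ) • x = x := by
  rw [smul_smul, ← Units.val_mul, Int.units_mul_self, Units.val_one, one_smul]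

variable {α R : Type*} [Fintype α] [DecidableEq α] [Ring R]

/-- The image `∑ sgn(σ) ρ(σ)` in a ring `R` of the antisymmetrizer, without the factor `1/k!`,
under a representation `ρ` of the symmetric group in `R`. -/
def signedSum (ρ : Perm α →* R) : R := ∑ σ, (σ.sign : ℤ) • ρ σ

lemma map_mul_signedSum (ρ : Perm α →* R) (g : Perm α) :
    ρ g * signedSum ρ = (g.sign : ℤ) • signedSum ρ := by
  rw [signedSum, mul_sum, smul_sum]
  refine Fintype.sum_equiv (Equiv.mulLeft g) _ _ fun σ => ?_
  rw [Equiv.coe_mulLeft, map_mul, map_mul, Units.val_mul, mul_smul, sign_smul_sign_smul,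
    mul_smul_comm]

lemma signedSum_mul_map (ρ : Perm α →* R) (g : Perm α) :
    signedSum ρ * ρ g = (g.sign : ℤ) • signedSum ρ := by
  rw [signedSum, sum_mul, smul_sum]
  refine Fintype.sum_equiv (Equiv.mulRight g) _ _ fun σ => ?_
  rw [Equiv.coe_mulRight, map_mul, map_mul, mul_comm σ.sign, Units.val_mul, mul_smul,
    sign_smul_sign_smul, smul_mul_assoc]

lemma mul_signedSum_of_mul_map_eq {ρ : Perm α →* R} {a : R}
    (ha : ∀ g, a * ρ g = (g.sign : ℤ) • a) :
    a * signedSum ρ = (Fintype.card α).factorial • a := by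
  simp only [signedSum, mul_sum, mul_smul_comm, ha, sign_smul_sign_smul, sum_const, card_univ,
    Fintype.card_perm]

variable {S M : Type*} [Semiring S] [AddCommGroup M] [Module S M]

lemma signedSum_apply (ρ : Perm α →* Module.End S M) (x : M) :
    signedSum ρ x = ∑ σ, (σ.sign : ℤ) • ρ σ x := by
  simp only [signedSum, LinearMap.sum_apply, LinearMap.smul_apply]

lemma signedSum_apply_of_map_apply_eq {ρ : Perm α →* Module.End S M} {x : M}
    (hx : ∀ g, ρ g x = (g.sign : ℤ) • x) :
    signedSum ρ x = (Fintype.card α).factorial • x := by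
  simp only [signedSum_apply, hx, sign_smul_sign_smul, sum_const, card_univ, Fintype.card_perm]

end SignedSum

section DeformedVandermonde

lemma sum_range_le_sum_of_injective {k : ℕ} {d : Fin k → ℕ} (hd : Function.Injective d) :
    ∑ i ∈ range k, i ≤ ∑ i, d i := by
  have hinj : Function.Injective fun i => (d i : ℤ) := Nat.cast_injective.comp hd
  have h := sum_range_le_sum (s := univ.image fun i => (d i : ℤ)) (c := 0) (by simp)
  rw [card_image_of_injective _ hinj, sum_image hinj.injOn, card_fin] at h
  simp only [zero_add] at h
  rwa [← Nat.cast_sum, ← Nat.cast_sum, Nat.cast_le] at h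

variable {k : ℕ} {R : Type*} [CommRing R]

lemma sum_sign_smul_prod_pow_eq_zero {d : Fin k → ℕ} (hd : ∑ i, d i < ∑ i ∈ range k, i)
    (y : Fin k → R) :
    ∑ σ : Perm (Fin k), (σ.sign : ℤ) • ∏ i, y (σ i) ^ d i = 0 := by
  obtain ⟨i, j, hij, hne⟩ : ∃ i j, d i = d j ∧ i ≠ j := by
    simpa [Function.Injective] using mt sum_range_le_sum_of_injective hd.not_ge
  have hdet : (Matrix.of fun i j => y i ^ d j).det = 0 :=
    Matrix.det_zero_of_column_eq hne fun l => by simp only [Matrix.of_apply, hij]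
  rwa [Matrix.det_apply] at hdet

lemma sum_sign_smul_eval_eq_zero {p : MvPolynomial (Fin k) R}
    (hp : p.totalDegree < ∑ i ∈ range k, i) (y : Fin k → R) :
    ∑ σ : Perm (Fin k), (σ.sign : ℤ) • eval (y ∘ σ) p = 0 := by
  simp_rw [eval_eq', smul_sum]
  rw [sum_comm]
  refine sum_eq_zero fun d hd => ?_
  have hdeg : ∑ i, d i < ∑ i ∈ range k, i := by
    rw [← Finsupp.sum_fintype d (fun _ e => e) fun _ => rfl]
    exact (le_totalDegree hd).trans_lt hp
  simp_rw [← mul_smul_comm, ← mul_sum, Function.comp_apply,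
    sum_sign_smul_prod_pow_eq_zero hdeg, mul_zero]

lemma sum_sign_smul_prod_sub_eq_zero {s : Finset (Fin k × Fin k)} (hs : #s < ∑ i ∈ range k, i)
    (y : Fin k → R) :
    ∑ σ : Perm (Fin k), (σ.sign : ℤ) • ∏ q ∈ s, (y (σ q.1) - y (σ q.2)) = 0 := by
  nontriviality R
  let p : MvPolynomial (Fin k) R := ∏ q ∈ s, (X q.1 - X q.2)
  have hp : p.totalDegree ≤ #s := by
    rw [card_eq_sum_ones]
    refine (totalDegree_finsetProd _ _).trans (sum_le_sum fun q _ => ?_)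
    simpa [totalDegree_X] using totalDegree_sub (X q.1 : MvPolynomial (Fin k) R) (X q.2)
  simpa [p, eval_prod] using sum_sign_smul_eval_eq_zero (hp.trans_lt hs) y

/-- The deformed Vandermonde product `Δ_t = ∏_{i<j} (y_i - y_j - t)`; the numerator and the
denominator in the antisymmetrizer formula are its values at `t = κ` and `t = 0`. -/
def deformedVandermonde (y : Fin k → R) (t : R) : R :=
  ∏ q ∈ ltPairs (Fin k), (y q.1 - y q.2 - t)

lemma map_deformedVandermonde {S F : Type*} [CommRing S] [FunLike F R S] [RingHomClass F R S]
    (φ : F) (y : Fin k → R) (t : R) :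
    φ (deformedVandermonde y t) = deformedVandermonde (φ ∘ y) (φ t) := by
  simp only [deformedVandermonde, map_prod, map_sub, Function.comp_apply]

lemma deformedVandermonde_zero_ne_zero [IsDomain R] {y : Fin k → R}
    (hinj : Function.Injective y) : deformedVandermonde y 0 ≠ 0 := by
  refine prod_ne_zero_iff.2 fun q hq => ?_
  rw [sub_zero]
  exact sub_ne_zero.2 (hinj.ne ((mem_filter_univ q).1 hq).ne)

lemma deformedVandermonde_comp_swap_mul (y : Fin k → R) (t : R) {a b : Fin k} (hab : a ⋖ b) :
    deformedVandermonde (y ∘ swap a b) t * (y a - y b - t) =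
      deformedVandermonde y t * (y b - y a - t) :=
  prod_ltPairs_swap_mul (fun i j => y i - y j - t) hab

lemma deformedVandermonde_zero_comp_perm (y : Fin k → R) (σ : Perm (Fin k)) :
    deformedVandermonde (y ∘ σ) 0 = (σ.sign : ℤ) • deformedVandermonde y 0 := by
  have hIoi (z : Fin k → R) : deformedVandermonde z 0 = ∏ i, ∏ j ∈ Ioi i, (z i - z j) := by
    simp only [deformedVandermonde, sub_zero, prod_filter, Fintype.prod_prod_type,
      ← filter_lt_eq_Ioi]
  rw [hIoi, hIoi, zsmul_eq_mul]
  exact σ.prod_Ioi_comp_eq_sign_mul_prod (f := fun i j => y i - y j) fun i j => (neg_sub _ _).symm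

lemma deformedVandermonde_eq_sum_powerset (y : Fin k → R) (t : R) :
    deformedVandermonde y t = ∑ s ∈ (ltPairs (Fin k)).powerset,
      (-t) ^ #(ltPairs (Fin k) \ s) * ∏ q ∈ s, (y q.1 - y q.2) := by
  simp only [deformedVandermonde, sub_eq_add_neg _ t, prod_add, prod_const, mul_comm]

lemma sum_sign_smul_deformedVandermonde (y : Fin k → R) (t : R) :
    ∑ σ : Perm (Fin k), (σ.sign : ℤ) • deformedVandermonde (y ∘ σ) t =
      k.factorial • deformedVandermonde y 0 := by
  have hlow : ∀ s ∈ (ltPairs (Fin k)).powerset, s ≠ ltPairs (Fin k) →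
      ∑ σ : Perm (Fin k), (σ.sign : ℤ) • ∏ q ∈ s, (y (σ q.1) - y (σ q.2)) = 0 :=
    fun s hs hne => sum_sign_smul_prod_sub_eq_zero
      (card_ltPairs_fin k ▸ card_lt_card ((mem_powerset.1 hs).ssubset_of_ne hne)) y
  have htop (σ : Perm (Fin k)) :
      ∏ q ∈ ltPairs (Fin k), (y (σ q.1) - y (σ q.2)) = (σ.sign : ℤ) • deformedVandermonde y 0 := by
    rw [← deformedVandermonde_zero_comp_perm]
    simp only [deformedVandermonde, sub_zero, Function.comp_apply]
  simp_rw [deformedVandermonde_eq_sum_powerset _ t, smul_sum, Function.comp_apply,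
    ← mul_smul_comm]
  rw [sum_comm]
  simp_rw [← mul_sum]
  rw [sum_eq_single_of_mem _ (mem_powerset_self _) fun s hs hne => by rw [hlow s hs hne, mul_zero]]
  simp_rw [htop, sign_smul_sign_smul, Finset.sdiff_self, card_empty, pow_zero, one_mul, sum_const,
    card_univ, Fintype.card_perm, Fintype.card_fin]

end DeformedVandermonde

section AdjacentTranspositions

variable {k : ℕ}

lemma fin_rel_of_covBy {r : Fin k → Fin k → Prop}
    (h : ∀ (i : ℕ) (hi : i + 1 < k), r ⟨i, Nat.lt_of_succ_lt hi⟩ ⟨i + 1, hi⟩)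
    (a b : Fin k) (hab : a ⋖ b) : r a b := by
  obtain ⟨i, hi⟩ := a
  obtain ⟨j, hj⟩ := b
  obtain rfl : i + 1 = j := by simpa using hab
  exact h i hj

lemma perm_fin_induction_of_covBy {P : Perm (Fin k) → Prop} (one : P 1)
    (mul : ∀ g h, P g → P h → P (g * h)) (adj : ∀ a b, a ⋖ b → P (swap a b))
    (g : Perm (Fin k)) : P g := by
  cases k with
  | zero => rwa [Subsingleton.elim g 1]
  | succ n =>
    have hg : g ∈ Submonoid.closure (Set.range fun i : Fin n => swap i.castSucc i.succ) := by
      rw [Equiv.Perm.mclosure_swap_castSucc_succ]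
      exact Submonoid.mem_top g
    induction hg using Submonoid.closure_induction with
    | mem x hx =>
      obtain ⟨i, rfl⟩ := hx
      exact adj _ _ (by simp)
    | one => exact one
    | mul g h _ _ hg hh => exact mul g h hg hh

lemma exists_moduleEnd_hom_of_covBy {S M : Type*} [Semiring S] [AddCommMonoid M] [Module S M]
    {ρ : Perm (Fin k) →* Function.End M} {D : Fin k → Fin k → Module.End S M}
    (hρ : ∀ a b, a ⋖ b → ρ (swap a b) = ⇑(D a b)) :
    ∃ ρ' : Perm (Fin k) →* Module.End S M, ∀ g, ⇑(ρ' g) = ρ g := by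
  have hlin (g : Perm (Fin k)) : ∃ L : Module.End S M, ⇑L = ρ g := by
    induction g using perm_fin_induction_of_covBy with
    | one => exact ⟨1, (map_one ρ).symm⟩
    | mul g h hg hh =>
      obtain ⟨L, hL⟩ := hg
      obtain ⟨L', hL'⟩ := hh
      exact ⟨L * L', by rw [map_mul, ← hL, ← hL']; rfl⟩
    | adj a b hab => exact ⟨D a b, (hρ a b hab).symm⟩
  choose L hL using hlin
  refine ⟨⟨⟨L, ?_⟩, fun g h => ?_⟩, hL⟩ <;> apply DFunLike.coe_injective
  · exact (hL 1).trans (map_one ρ)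
  · change ⇑(L (g * h)) = ⇑(L g) ∘ ⇑(L h)
    rw [hL, hL, hL, map_mul]
    rfl

lemma two_ne_zero_of_factorial_ne_zero {R : Type*} [Semiring R] (hk : (k.factorial : R) ≠ 0)
    (h : 2 ≤ k) : (2 : R) ≠ 0 := by
  intro h2
  obtain ⟨m, hm⟩ := Nat.dvd_factorial two_pos h
  exact hk (by rw [hm, Nat.cast_mul, Nat.cast_ofNat, h2, zero_mul])

end AdjacentTranspositions

section Demazure

variable {k : ℕ} {K : Type*} [Field K] [MulSemiringAction (Perm (Fin k)) K]

variable (k K) in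
/-- The field of symmetric elements, over which all the operators considered are linear. -/
abbrev symmetricSubfield : Subfield K := FixedPoints.subfield (Perm (Fin k)) K

variable (k K) in
/-- The undeformed action of the symmetric group on `K`, as a representation by operators linear
over the symmetric elements. -/
def permRep : Perm (Fin k) →* Module.End (symmetricSubfield k K) K :=
  DistribMulAction.toModuleEnd (symmetricSubfield k K) K

lemma permRep_apply (g : Perm (Fin k)) (x : K) : permRep k K g x = g • x := rfl

/-- The Demazure-type operator `x ↦ s x + κ (x - s x) / (y_a - y_b)` with `s = (a b)`. For `a ⋖ b`
this is the deformed action of a simple transposition. -/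
def demazure (y : Fin k → K) (κ : K) (a b : Fin k) : Module.End (symmetricSubfield k K) K where
  toFun x := swap a b • x + κ * (x - swap a b • x) / (y a - y b)
  map_add' x z := by rw [smul_add]; ring
  map_smul' c x := by
    rw [smul_comm (swap a b) c x]
    simp only [Subfield.smul_def, smul_eq_mul, RingHom.id_apply]
    ring

lemma demazure_apply (y : Fin k → K) (κ : K) (a b : Fin k) (x : K) :
    demazure y κ a b x = swap a b • x + κ * (x - swap a b • x) / (y a - y b) := rfl

variable {y : Fin k → K} (hy : ∀ (g : Perm (Fin k)) i, g • y i = y (g i))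

include hy

lemma smul_deformedVandermonde {t : K} (ht : ∀ g : Perm (Fin k), g • t = t) (g : Perm (Fin k)) :
    g • deformedVandermonde y t = deformedVandermonde (y ∘ g) t := by
  have h := map_deformedVandermonde (MulSemiringAction.toRingHom _ K g) y t
  simpa only [MulSemiringAction.toRingHom_apply, Function.comp_def, hy, ht] using h

lemma signedSum_permRep_deformedVandermonde {t : K} (ht : ∀ g : Perm (Fin k), g • t = t) :
    signedSum (permRep k K) (deformedVandermonde y t) =
      k.factorial • deformedVandermonde y 0 := by
  simp only [signedSum_apply, permRep_apply, smul_deformedVandermonde hy ht,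
    sum_sign_smul_deformedVandermonde]

lemma signedSum_permRep_div_mem_symmetricSubfield (x : K) :
    signedSum (permRep k K) x / deformedVandermonde y 0 ∈ symmetricSubfield k K := by
  intro g
  have hnum : g • signedSum (permRep k K) x = (g.sign : ℤ) • signedSum (permRep k K) x := by
    rw [← permRep_apply, ← Module.End.mul_apply, map_mul_signedSum, LinearMap.smul_apply]
  rw [smul_div₀', hnum, smul_deformedVandermonde hy fun g => smul_zero g,
    deformedVandermonde_zero_comp_perm, zsmul_eq_mul, zsmul_eq_mul]
  exact mul_div_mul_left _ _ (g.sign.isUnit.map (Int.castRingHom K)).ne_zero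

variable (hinj : Function.Injective y)

include hinj

lemma factorial_smul_apply_of_mul_permRep_eq {B : Module.End (symmetricSubfield k K) K}
    (hB : ∀ g, B * permRep k K g = (g.sign : ℤ) • B) (x : K) :
    k.factorial • B x =
      signedSum (permRep k K) x / deformedVandermonde y 0 * B (deformedVandermonde y 0) := by
  let c : symmetricSubfield k K := ⟨_, signedSum_permRep_div_mem_symmetricSubfield hy x⟩
  have hx : signedSum (permRep k K) x = c • deformedVandermonde y 0 :=
    (div_mul_cancel₀ _ (deformedVandermonde_zero_ne_zero hinj)).symm
  calc k.factorial • B x = (B * signedSum (permRep k K)) x := by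
        rw [mul_signedSum_of_mul_map_eq hB, Fintype.card_fin, LinearMap.smul_apply]
    _ = c • B (deformedVandermonde y 0) := by rw [Module.End.mul_apply, hx, map_smul]

variable {κ : K} (hκ : ∀ g : Perm (Fin k), g • κ = κ)

include hκ

lemma sub_ne_of_forall_smul_eq (h2 : (2 : K) ≠ 0) {a b : Fin k} (hab : a ≠ b) :
    y a - y b ≠ κ := by
  intro h
  have hswap : y b - y a = κ := by
    simpa only [smul_sub, hy, hκ, Equiv.swap_apply_left, Equiv.swap_apply_right]
      using congrArg (swap a b • ·) h
  have hdouble : 2 * (y a - y b) = 0 := by linear_combination h - hswap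
  exact hab (hinj (sub_eq_zero.1 ((mul_eq_zero.1 hdouble).resolve_left h2)))

lemma demazure_deformedVandermonde {a b : Fin k} (hab : a ⋖ b) :
    demazure y κ a b (deformedVandermonde y κ) = -deformedVandermonde y κ := by
  have hne : y a - y b ≠ 0 := sub_ne_zero.2 (hinj.ne hab.lt.ne)
  rw [demazure_apply, smul_deformedVandermonde hy hκ]
  field_simp
  linear_combination deformedVandermonde_comp_swap_mul y κ hab

lemma exists_add_demazure_eq_add_swap_smul (h2 : (2 : K) ≠ 0) {a b : Fin k} (hab : a ≠ b) (x : K) :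
    ∃ z, z + demazure y κ a b z = x + swap a b • x := by
  have hne : y a - y b ≠ 0 := sub_ne_zero.2 (hinj.ne hab)
  have hneκ : y a - y b - κ ≠ 0 := sub_ne_zero.2 (sub_ne_of_forall_smul_eq hy hinj hκ h2 hab)
  have hneκ' : y b - y a - κ ≠ 0 :=
    sub_ne_zero.2 (sub_ne_of_forall_smul_eq hy hinj hκ h2 hab.symm)
  -- The left side is `w + swap a b • w` for `w = z * (1 + κ / (y a - y b))`; solve `w = x` for `z`.
  refine ⟨x * (y b - y a) / (y b - y a - κ), ?_⟩
  rw [demazure_apply]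
  simp only [smul_div₀', smul_mul', smul_sub, hy, hκ, Equiv.swap_apply_left,
    Equiv.swap_apply_right]
  field_simp
  ring

variable {ρ : Perm (Fin k) →* Module.End (symmetricSubfield k K) K}
  (hρ : ∀ a b : Fin k, a ⋖ b → ρ (swap a b) = demazure y κ a b)

include hρ

lemma demazureRep_deformedVandermonde (g : Perm (Fin k)) :
    ρ g (deformedVandermonde y κ) = (g.sign : ℤ) • deformedVandermonde y κ := by
  induction g using perm_fin_induction_of_covBy with
  | one => simp
  | mul g h hg hh =>
    rw [map_mul, Module.End.mul_apply, hh, map_zsmul, hg, smul_smul, map_mul, Units.val_mul,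
      mul_comm]
  | adj a b hab =>
    rw [hρ a b hab, demazure_deformedVandermonde hy hinj hκ hab, Equiv.Perm.sign_swap hab.lt.ne]
    simp

variable (hk : (k.factorial : K) ≠ 0)

include hk

lemma signedSum_demazureRep_mul_permRep (g : Perm (Fin k)) :
    signedSum ρ * permRep k K g = (g.sign : ℤ) • signedSum ρ := by
  induction g using perm_fin_induction_of_covBy with
  | one => simp
  | mul g h hg hh =>
    rw [map_mul, ← mul_assoc, hg, smul_mul_assoc, hh, smul_smul, map_mul, Units.val_mul]
  | adj a b hab =>
    have hsign : ((swap a b).sign : ℤ) = -1 := by simp [Equiv.Perm.sign_swap hab.lt.ne]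
    have h2 : (2 : K) ≠ 0 :=
      two_ne_zero_of_factorial_ne_zero hk (Fin.nontrivial_iff_two_le.1 ⟨a, b, hab.lt.ne⟩)
    ext x
    obtain ⟨z, hz⟩ := exists_add_demazure_eq_add_swap_smul hy hinj hκ h2 hab.lt.ne x
    have hkill : signedSum ρ (z + ρ (swap a b) z) = 0 := by
      rw [map_add, ← Module.End.mul_apply, signedSum_mul_map, hsign, neg_one_smul,
        LinearMap.neg_apply, add_neg_cancel]
    rw [hρ a b hab, hz, map_add] at hkill
    rw [hsign, neg_one_smul, LinearMap.neg_apply, Module.End.mul_apply, permRep_apply]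
    exact eq_neg_of_add_eq_zero_right hkill

lemma signedSum_demazureRep_deformedVandermonde_zero :
    signedSum ρ (deformedVandermonde y 0) = k.factorial • deformedVandermonde y κ := by
  have h := factorial_smul_apply_of_mul_permRep_eq hy hinj
    (signedSum_demazureRep_mul_permRep hy hinj hκ hρ hk) (deformedVandermonde y κ)
  rw [signedSum_permRep_deformedVandermonde hy hκ,
    signedSum_apply_of_map_apply_eq (demazureRep_deformedVandermonde hy hinj hκ hρ),
    Fintype.card_fin, smul_div_assoc, div_self (deformedVandermonde_zero_ne_zero hinj),
    smul_mul_assoc, one_mul] at h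
  simp only [nsmul_eq_mul] at h ⊢
  exact (mul_left_cancel₀ hk h).symm

lemma signedSum_demazureRep_apply (x : K) :
    signedSum ρ x =
      deformedVandermonde y κ / deformedVandermonde y 0 * signedSum (permRep k K) x := by
  have h := factorial_smul_apply_of_mul_permRep_eq hy hinj
    (signedSum_demazureRep_mul_permRep hy hinj hκ hρ hk) x
  rw [signedSum_demazureRep_deformedVandermonde_zero hy hinj hκ hρ hk, nsmul_eq_mul,
    nsmul_eq_mul] at h
  apply mul_left_cancel₀ hk
  rw [h]
  ring

end Demazure

theorem statement5_general {k : ℕ} {K : Type*} [Field K] [MulSemiringAction (Perm (Fin k)) K]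
    {y : Fin k → K} (hy : ∀ (g : Perm (Fin k)) i, g • y i = y (g i))
    (hinj : Function.Injective y) {κ : K} (hκ : ∀ g : Perm (Fin k), g • κ = κ)
    (hk : (k.factorial : K) ≠ 0) (ρ : Perm (Fin k) →* Function.End K)
    (hρ : ∀ a b : Fin k, a ⋖ b → ρ (swap a b) = ⇑(demazure y κ a b)) (x : K) :
    (k.factorial : K)⁻¹ * ∑ σ, ((σ.sign : ℤ) : K) * ρ σ x =
      (k.factorial : K)⁻¹ * (∏ q ∈ ltPairs (Fin k), (y q.1 - y q.2 - κ) / (y q.1 - y q.2)) *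
        ∑ σ : Perm (Fin k), ((σ.sign : ℤ) : K) * σ • x := by
  obtain ⟨ρ', hρ'⟩ := exists_moduleEnd_hom_of_covBy hρ
  have hadj (a b : Fin k) (hab : a ⋖ b) : ρ' (swap a b) = demazure y κ a b :=
    DFunLike.coe_injective ((hρ' _).trans (hρ a b hab))
  have h := signedSum_demazureRep_apply hy hinj hκ hadj hk x
  simp only [signedSum_apply, zsmul_eq_mul, hρ', permRep_apply] at h
  rw [h, prod_div_distrib, mul_assoc]
  simp only [deformedVandermonde, sub_zero]

section RatField

variable {k : ℕ}

lemma permMap_algebraMap (g : Perm (Fin k)) (p : MvPolynomial (Fin k) ℂ) :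
    permMap g (algebraMap _ (RatField k) p) = algebraMap _ (RatField k) (rename g p) :=
  IsFractionRing.lift_algebraMap _ p

lemma permMap_algebraMap_C (g : Perm (Fin k)) (c : ℂ) :
    permMap g (algebraMap (MvPolynomial (Fin k) ℂ) (RatField k) (C c)) =
      algebraMap (MvPolynomial (Fin k) ℂ) (RatField k) (C c) := by
  rw [permMap_algebraMap, rename_C]

lemma permMap_Yv (g : Perm (Fin k)) (i : Fin k) : permMap g (Yv i) = Yv (g i) := by
  rw [Yv, permMap_algebraMap, rename_X, Yv]

lemma Yv_injective : Function.Injective (Yv (k := k)) :=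
  (IsFractionRing.injective (MvPolynomial (Fin k) ℂ) (RatField k)).comp X_injective

/-- The action of the symmetric group on rational functions by permuting the variables. -/
noncomputable instance permMapAction : MulSemiringAction (Perm (Fin k)) (RatField k) where
  smul g := permMap g
  one_smul := DFunLike.congr_fun (f := permMap 1) (g := RingHom.id _) <|
    IsLocalization.ringHom_ext (nonZeroDivisors (MvPolynomial (Fin k) ℂ)) <|
      RingHom.ext fun p => by simp [permMap_algebraMap]
  mul_smul g h := DFunLike.congr_fun (f := permMap (g * h)) (g := (permMap g).comp (permMap h)) <|
    IsLocalization.ringHom_ext (nonZeroDivisors (MvPolynomial (Fin k) ℂ)) <|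
      RingHom.ext fun p => by simp [permMap_algebraMap, rename_rename]
  smul_zero g := map_zero (permMap g)
  smul_add g := map_add (permMap g)
  smul_one g := map_one (permMap g)
  smul_mul g := map_mul (permMap g)

end RatField

end Antisymmetrizer

/-- Let `ρ` be the action of `S_k` in which each simple transposition
acts by the Demazure-type operator `σ_i^κ`, and let `(e_k^-)^κ` be the induced action of
the antisymmetrizer `e_k^- = (1/k!) ∑_{σ ∈ S_k} sgn(σ) σ`.  Then for any polynomial `f`,
`(e_k^-)^κ f = (1/k!) ∏_{i<j} ((Y_i − Y_j − κ)/(Y_i − Y_j)) ·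
∑_{σ ∈ S_k} sgn(σ) f(Y_{σ(1)},…,Y_{σ(k)})`. -/
theorem statement5 (k : ℕ) (κ : ℂ)
    (ρ : Equiv.Perm (Fin k) → RatField k → RatField k)
    (hone : ρ 1 = id)
    (hmul : ∀ g h : Equiv.Perm (Fin k), ρ (g * h) = ρ g ∘ ρ h)
    (hgen : ∀ (i : ℕ) (h : i + 1 < k),
      ρ (Equiv.swap ⟨i, by omega⟩ ⟨i + 1, h⟩) = Dem κ ⟨i, by omega⟩ ⟨i + 1, h⟩)
    (p : MvPolynomial (Fin k) ℂ) :
    ((k.factorial : RatField k))⁻¹ *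
        ∑ σ : Equiv.Perm (Fin k),
          ((Equiv.Perm.sign σ : ℤ) : RatField k) *
            ρ σ (algebraMap (MvPolynomial (Fin k) ℂ) (RatField k) p) =
      ((k.factorial : RatField k))⁻¹ *
        (∏ q ∈ Finset.univ.filter fun q : Fin k × Fin k => q.1 < q.2,
          ((Yv q.1 - Yv q.2 -
              algebraMap (MvPolynomial (Fin k) ℂ) (RatField k) (C κ)) /
            (Yv q.1 - Yv q.2))) *
        ∑ σ : Equiv.Perm (Fin k),
          ((Equiv.Perm.sign σ : ℤ) : RatField k) *
            permMap σ (algebraMap (MvPolynomial (Fin k) ℂ) (RatField k) p) := by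
  have hadj : ∀ a b : Fin k, a ⋖ b → ρ (Equiv.swap a b) = Dem κ a b := fin_rel_of_covBy hgen
  exact statement5_general permMap_Yv Yv_injective (permMap_algebraMap_C · κ)
    (Nat.cast_ne_zero.2 k.factorial_ne_zero) ⟨⟨ρ, hone⟩, hmul⟩ hadj _
end

section
/- The Feigin-Odesskii shuffle product preserves the degree truncation: if f ∈ ℂ[Y_1,...,Y_k]^{S_k} and g ∈ ℂ[Y_1,...,Y_l]^{S_l} each have degree strictly less than N in every variable, then f *^κ g ∈ ℂ[Y_1,...,Y_{k+l}]^{S_{k+l}} also has degree strictly less than N in every variable. -/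
open MvPolynomial Finset

/-- The substitution `Y i ↦ Y (e i)` along an injective map of variable sets. -/
noncomputable def embK {a b : ℕ} (e : Fin a → Fin b) (he : Function.Injective e) :
    RatField a →+* RatField b :=
  IsFractionRing.lift
    (g := (algebraMap (MvPolynomial (Fin b) ℂ) (RatField b)).comp (rename e).toRingHom)
    (by
      exact (IsFractionRing.injective (MvPolynomial (Fin b) ℂ) (RatField b)).comp
        (rename_injective _ he))

lemma castAdd_inj {k l : ℕ} : Function.Injective (Fin.castAdd l : Fin k → Fin (k + l)) :=
  Fin.castAdd_injective k l

lemma natAdd_inj {k l : ℕ} : Function.Injective (Fin.natAdd k : Fin l → Fin (k + l)) := by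
  intro x y h
  have := congrArg Fin.val h
  simp only [Fin.coe_natAdd] at this
  exact Fin.ext (by omega)

/-- The rational Feigin–Odesskii shuffle product. -/
noncomputable def shuffle (κ : ℂ) {k l : ℕ} (f : RatField k) (g : RatField l) :
    RatField (k + l) :=
  ((k.factorial * l.factorial : ℕ) : RatField (k + l))⁻¹ *
    ∑ σ : Equiv.Perm (Fin (k + l)),
      (∏ i : Fin k, ∏ j : Fin l,
        ((Yv (σ (Fin.castAdd l i)) - Yv (σ (Fin.natAdd k j)) +
            algebraMap (MvPolynomial (Fin (k + l)) ℂ) (RatField (k + l)) (C κ)) /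
          (Yv (σ (Fin.castAdd l i)) - Yv (σ (Fin.natAdd k j))))) *
        embK (fun i => σ (Fin.castAdd l i)) (σ.injective.comp castAdd_inj) f *
        embK (fun j => σ (Fin.natAdd k j)) (σ.injective.comp natAdd_inj) g

/-!
Write `V` for the Vandermonde polynomial. Every summand of the shuffle product has a denominator
which is a factor of some permutation of `V`, and permutations fix `V` up to sign. Over the common
denominator `V` the sum over permutations is therefore `A / V`, where `A` is the antisymmetrization
of a polynomial. Since `A` is alternating, each of the pairwise non-associated primes `X j - X i`
divides it, so `A = V * s` with `s` symmetric. Each variable has degree `k + l - 1` in `V` and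
degree less than `k + l - 1 + N` in `A`, hence degree less than `N` in `s`.
-/

lemma prod_dvd_of_prime_of_pairwise_not_dvd {M α : Type*} [CommMonoidWithZero M]
    {s : Finset α} {f : α → M} {a : M} (hprime : ∀ i ∈ s, Prime (f i))
    (hpair : (s : Set α).Pairwise fun i j => ¬ f i ∣ f j)
    (hdvd : ∀ i ∈ s, f i ∣ a) : ∏ i ∈ s, f i ∣ a := by
  classical
  induction s using Finset.induction_on with
  | empty => simp
  | insert i s hi ih =>
    obtain ⟨c, rfl⟩ := ih (fun j hj => hprime j (mem_insert_of_mem hj))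
      (hpair.mono (coe_subset.mpr (subset_insert i s)))
      (fun j hj => hdvd j (mem_insert_of_mem hj))
    have hi_prime := hprime i (mem_insert_self i s)
    have hi_not_dvd : ¬ f i ∣ ∏ j ∈ s, f j := fun h => by
      obtain ⟨j, hj, hij⟩ := hi_prime.exists_mem_finset_dvd h
      exact hpair (mem_insert_self i s) (mem_insert_of_mem hj)
        (ne_of_mem_of_not_mem hj hi).symm hij
    have hic : f i ∣ c :=
      (hi_prime.dvd_or_dvd (hdvd i (mem_insert_self i s))).resolve_left hi_not_dvd
    rw [prod_insert hi, mul_comm (f i)]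
    exact mul_dvd_mul_left _ hic

section Differences

variable {R ι α : Type*} [CommRing R]

lemma degreeOf_X_sub_X_sub_C [Nontrivial R] [DecidableEq ι] {i j : ι} (hij : i ≠ j) (c : R)
    (m : ι) : degreeOf m (X i - X j - C c : MvPolynomial ι R) =
      (if m = i then 1 else 0) + if m = j then 1 else 0 := by
  have hX_sub_C {n : ι} (hn : m ≠ n) (a : R) : degreeOf m (X n - C a) = 0 :=
    Nat.le_zero.mp <| (degreeOf_sub_le m _ _).trans (by simp [degreeOf_X_of_ne hn])
  have hdominant (p : MvPolynomial ι R) (hp : degreeOf m p = 0) : degreeOf m (X m - p) = 1 := by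
    rw [sub_eq_add_neg, degreeOf_add_eq_of_degreeOf_lt] <;> simp [degreeOf_neg, hp]
  rcases eq_or_ne m i with rfl | hmi
  · rw [sub_sub, hdominant]
    · simp [hij]
    · simpa using hX_sub_C hij (-c)
  rcases eq_or_ne m j with rfl | hmj
  · rw [sub_right_comm, ← degreeOf_neg, neg_sub, hdominant _ (hX_sub_C hmi c)]
    simp [hmi]
  · have h := degreeOf_sub_le m (X i - C c) (X j : MvPolynomial ι R)
    rw [hX_sub_C hmi, degreeOf_X_of_ne hmj, sub_right_comm] at h
    simpa [hmi, hmj] using h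

lemma degreeOf_rename_of_notMem_range {e : α → ι} {m : ι} (hm : m ∉ Set.range e)
    (p : MvPolynomial α R) : degreeOf m (rename e p) = 0 := by
  classical
  by_contra h
  have hmem := vars_rename e p (mem_vars_iff_degreeOf_ne_zero.mpr h)
  obtain ⟨i, -, hi⟩ := Finset.mem_image.mp hmem
  exact hm ⟨i, hi⟩

lemma X_sub_X_dvd_sub_rename_update [DecidableEq ι] (i j : ι) (p : MvPolynomial ι R) :
    X i - X j ∣ p - rename (Function.update id j i) p := by
  induction p using MvPolynomial.induction_on with
  | C a => simp
  | add p q hp hq => simpa only [map_add, add_sub_add_comm] using dvd_add hp hq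
  | mul_X p n hp =>
    have hn : (X i - X j : MvPolynomial ι R) ∣ X n - X (Function.update id j i n) := by
      rcases eq_or_ne n j with rfl | hn
      · rw [Function.update_self, dvd_sub_comm]
      · simp [hn]
    rw [map_mul, rename_X]
    exact dvd_mul_sub_mul hp hn

lemma X_sub_X_dvd_iff [DecidableEq ι] {i j : ι} {p : MvPolynomial ι R} :
    X i - X j ∣ p ↔ rename (Function.update id j i) p = 0 := by
  refine ⟨fun h => ?_, fun h => by simpa [h] using X_sub_X_dvd_sub_rename_update i j p⟩
  have himage := map_dvd (rename (R := R) (Function.update id j i)) h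
  have hcollapse : Function.update id j i i = i := by
    rcases eq_or_ne i j with rfl | hij <;> simp [*]
  simpa [hcollapse] using himage

lemma X_sub_X_dvd_X_sub_X_iff [Nontrivial R] {a b i j : ι} (hij : i ≠ j) :
    (X a - X b : MvPolynomial ι R) ∣ X i - X j ↔ s(a, b) = s(i, j) := by
  classical
  rw [X_sub_X_dvd_iff, map_sub, rename_X, rename_X, sub_eq_zero, X_injective.eq_iff, Sym2.eq_iff]
  simp only [Function.update_apply, id_eq]
  grind

lemma prime_X_sub_X [IsDomain R] {i j : ι} (hij : i ≠ j) :
    Prime (X i - X j : MvPolynomial ι R) := by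
  classical
  refine ⟨sub_ne_zero.mpr (X_injective.ne hij), fun h => ?_, fun p q h => ?_⟩
  · have hone : (X i - X j : MvPolynomial ι R) ∣ 1 := h.dvd
    simp [X_sub_X_dvd_iff] at hone
  · simpa only [X_sub_X_dvd_iff, map_mul, mul_eq_zero] using h

end Differences

section Alternating

variable {R ι : Type*} [CommRing R] [Fintype ι] [DecidableEq ι]

/-- A polynomial is alternating if permuting its variables multiplies it by the sign of the
permutation. Over a ring of characteristic two this is the same as being symmetric. -/
def IsAlternatingPoly (p : MvPolynomial ι R) : Prop :=
  ∀ σ : Equiv.Perm ι, rename σ p = Equiv.Perm.sign σ • p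

lemma IsAlternatingPoly.X_sub_X_dvd [IsDomain R] [NeZero (2 : R)] {p : MvPolynomial ι R}
    (hp : IsAlternatingPoly p) {i j : ι} (hij : i ≠ j) : X i - X j ∣ p := by
  rw [X_sub_X_dvd_iff]
  set r : ι → ι := Function.update id j i
  have hr : r ∘ Equiv.swap i j = r := by
    funext n
    simp only [r, Function.comp_apply, Function.update_apply, Equiv.swap_apply_def, id_eq]
    grind
  have hneg : rename r p = -rename r p := by
    have h := congrArg (rename r) (hp (Equiv.swap i j))
    simpa [rename_rename, hr, Equiv.Perm.sign_swap hij] using h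
  have htwo : C (2 : R) * rename r p = 0 := by
    rw [map_ofNat, two_mul, ← eq_neg_iff_add_eq_zero]
    exact hneg
  exact (mul_eq_zero.mp htwo).resolve_left (C_ne_zero.mpr two_ne_zero)

/-- The sum of `sign σ • σ p` over all permutations `σ` of the variables, without dividing by
the number of permutations. -/
noncomputable def antisymmetrize (p : MvPolynomial ι R) : MvPolynomial ι R :=
  ∑ σ : Equiv.Perm ι, Equiv.Perm.sign σ • rename σ p

lemma isAlternatingPoly_antisymmetrize (p : MvPolynomial ι R) :
    IsAlternatingPoly (antisymmetrize p) := by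
  intro τ
  simp only [antisymmetrize, map_sum, smul_sum]
  refine Fintype.sum_equiv (Equiv.mulLeft τ) _ _ fun σ => ?_
  have hsign : Equiv.Perm.sign τ • Equiv.Perm.sign (τ * σ) = Equiv.Perm.sign σ := by
    simp [← mul_assoc]
  rw [Equiv.coe_mulLeft, smul_smul, ← smul_eq_mul, hsign, Equiv.Perm.coe_mul, ← rename_rename]
  simp only [Units.smul_def, map_zsmul]

lemma degreeOf_antisymmetrize_le {p : MvPolynomial ι R} {d : ℕ} (hp : ∀ i, degreeOf i p ≤ d)
    (i : ι) : degreeOf i (antisymmetrize p) ≤ d := by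
  refine (degreeOf_sum_le i _ _).trans (Finset.sup_le fun σ _ => ?_)
  have hrename : degreeOf i (rename σ p) ≤ d := by
    simpa using (degreeOf_rename_of_injective (p := p) σ.injective (σ.symm i)).trans_le (hp _)
  rcases Int.units_eq_one_or (Equiv.Perm.sign σ) with h | h <;>
    simpa [h, degreeOf_neg] using hrename

end Alternating

section Vandermonde

variable {R : Type*} [CommRing R] {n k l : ℕ}

lemma castAdd_lt_natAdd (i : Fin k) (j : Fin l) : Fin.castAdd l i < Fin.natAdd k j := by
  simp only [Fin.lt_def, Fin.val_castAdd, Fin.val_natAdd]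
  omega

lemma castAdd_ne_natAdd (i : Fin k) (j : Fin l) : Fin.castAdd l i ≠ Fin.natAdd k j :=
  (castAdd_lt_natAdd i j).ne

lemma det_vandermonde_fin_add (v : Fin (k + l) → R) :
    (Matrix.vandermonde v).det =
      (Matrix.vandermonde (v ∘ Fin.castAdd l)).det * (Matrix.vandermonde (v ∘ Fin.natAdd k)).det *
        ∏ i : Fin k, ∏ j : Fin l, (v (Fin.natAdd k j) - v (Fin.castAdd l i)) := by
  have hIoi (m : ℕ) (w : Fin m → R) (i : Fin m) :
      ∏ j ∈ Ioi i, (w j - w i) = ∏ j, if i < j then w j - w i else 1 := by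
    rw [← prod_filter, filter_lt_eq_Ioi]
  simp only [Matrix.det_vandermonde, hIoi, Fin.prod_univ_add, castAdd_lt_natAdd,
    (castAdd_lt_natAdd _ _).not_gt, if_true, if_false, prod_mul_distrib, prod_const_one,
    (Fin.strictMono_castAdd l).lt_iff_lt, (Fin.strictMono_natAdd k).lt_iff_lt, Function.comp_apply]
  ring

variable (R n) in
/-- The Vandermonde determinant of the variables, i.e. `∏ i < j, (X j - X i)`. -/
noncomputable def vandermondePoly : MvPolynomial (Fin n) R :=
  (Matrix.vandermonde X).det

lemma rename_vandermondePoly {ι : Type*} (e : Fin n → ι) :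
    rename e (vandermondePoly R n) =
      (Matrix.vandermonde (X ∘ e : Fin n → MvPolynomial ι R)).det := by
  simp only [vandermondePoly, Matrix.det_vandermonde, map_prod, map_sub, rename_X,
    Function.comp_apply]

lemma isAlternatingPoly_vandermondePoly : IsAlternatingPoly (vandermondePoly R n) := by
  intro σ
  rw [rename_vandermondePoly, Units.smul_def, zsmul_eq_mul]
  exact Matrix.det_permute σ (Matrix.vandermonde X)

variable [IsDomain R]

lemma vandermondePoly_ne_zero : vandermondePoly R n ≠ 0 :=
  Matrix.det_vandermonde_ne_zero_iff.mpr X_injective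

lemma degreeOf_vandermondePoly (m : Fin n) : degreeOf m (vandermondePoly R n) = n - 1 := by
  have hfactor (i : Fin n) : ∀ j ∈ Ioi i, (X j - X i : MvPolynomial (Fin n) R) ≠ 0 := fun j hj =>
    sub_ne_zero.mpr (X_injective.ne (mem_Ioi.mp hj).ne')
  calc degreeOf m (vandermondePoly R n)
      = ∑ i, ∑ j ∈ Ioi i, degreeOf m (X j - X i : MvPolynomial (Fin n) R) := by
        rw [vandermondePoly, Matrix.det_vandermonde,
          degreeOf_prod_eq _ _ fun i _ => prod_ne_zero_iff.mpr (hfactor i)]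
        exact sum_congr rfl fun i _ => degreeOf_prod_eq _ _ (hfactor i)
    _ = ∑ i, ∑ j ∈ Ioi i, ((if m = j then 1 else 0) + if m = i then 1 else 0) := by
        refine sum_congr rfl fun i _ => sum_congr rfl fun j hj => ?_
        simpa using degreeOf_X_sub_X_sub_C (mem_Ioi.mp hj).ne' (0 : R) m
    _ = #(Iio m) + #(Ioi m) := by
        simp [sum_add_distrib, filter_gt_eq_Iio]
    _ = n - 1 := by
        rw [Fin.card_Iio, Fin.card_Ioi]
        omega

lemma degreeOf_le_of_degreeOf_vandermondePoly_mul_le {s : MvPolynomial (Fin n) R} {m : Fin n}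
    {d : ℕ} (h : degreeOf m (vandermondePoly R n * s) ≤ n - 1 + d) : degreeOf m s ≤ d := by
  rcases eq_or_ne s 0 with rfl | hs
  · simp
  · rwa [degreeOf_mul_eq vandermondePoly_ne_zero hs, degreeOf_vandermondePoly,
      Nat.add_le_add_iff_left] at h

lemma isSymmetric_of_isAlternatingPoly_vandermondePoly_mul {s : MvPolynomial (Fin n) R}
    (h : IsAlternatingPoly (vandermondePoly R n * s)) : s.IsSymmetric := by
  intro σ
  have hσ := h σ
  rw [map_mul, isAlternatingPoly_vandermondePoly σ, smul_mul_assoc] at hσ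
  exact mul_left_cancel₀ vandermondePoly_ne_zero (smul_left_cancel _ hσ)

lemma IsAlternatingPoly.exists_eq_vandermondePoly_mul [NeZero (2 : R)]
    {p : MvPolynomial (Fin n) R} (hp : IsAlternatingPoly p) :
    ∃ s : MvPolynomial (Fin n) R, s.IsSymmetric ∧ p = vandermondePoly R n * s := by
  suffices vandermondePoly R n ∣ p by
    obtain ⟨s, rfl⟩ := this
    exact ⟨s, isSymmetric_of_isAlternatingPoly_vandermondePoly_mul hp, rfl⟩
  rw [vandermondePoly, Matrix.det_vandermonde, prod_sigma']
  have hlt {x : Σ _ : Fin n, Fin n} (hx : x ∈ univ.sigma Ioi) : x.1 < x.2 :=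
    mem_Ioi.mp (mem_sigma.mp hx).2
  refine prod_dvd_of_prime_of_pairwise_not_dvd (fun x hx => prime_X_sub_X (hlt hx).ne')
    (fun x hx y hy hxy => ?_) fun x hx => hp.X_sub_X_dvd (hlt hx).ne'
  beta_reduce
  rw [X_sub_X_dvd_X_sub_X_iff (hlt hy).ne', Sym2.eq_iff]
  have := hlt hx
  have := hlt hy
  grind

end Vandermonde

section ShuffleNumerator

variable {R : Type*} [CommRing R] {k l : ℕ}

/-- The product of `X j - X i - c` over all `i` in the first block of `k` variables and `j` in the
second block of `l` variables. The weight in the shuffle product is the quotient of the values of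
this kernel at `c = κ` and `c = 0`: the sign of every factor is reversed, to agree with
`vandermondePoly`. -/
noncomputable def shuffleKernel (k l : ℕ) (c : R) : MvPolynomial (Fin (k + l)) R :=
  ∏ i : Fin k, ∏ j : Fin l, (X (Fin.natAdd k j) - X (Fin.castAdd l i) - C c)

/-- The polynomial whose antisymmetrization is `k! l!` times the product of the Vandermonde
polynomial with the shuffle product of `f` and `g`. -/
noncomputable def shuffleNumerator (c : R) (f : MvPolynomial (Fin k) R)
    (g : MvPolynomial (Fin l) R) : MvPolynomial (Fin (k + l)) R :=
  shuffleKernel k l c * rename (Fin.castAdd l) (vandermondePoly R k * f) *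
    rename (Fin.natAdd k) (vandermondePoly R l * g)

lemma vandermondePoly_add :
    vandermondePoly R (k + l) = rename (Fin.castAdd l) (vandermondePoly R k) *
      rename (Fin.natAdd k) (vandermondePoly R l) * shuffleKernel k l 0 := by
  simp only [rename_vandermondePoly, shuffleKernel, map_zero, sub_zero]
  exact det_vandermonde_fin_add X

lemma shuffleNumerator_mul_shuffleKernel_zero (c : R) (f : MvPolynomial (Fin k) R)
    (g : MvPolynomial (Fin l) R) :
    shuffleNumerator c f g * shuffleKernel k l 0 =
      shuffleKernel k l c * rename (Fin.castAdd l) f * rename (Fin.natAdd k) g *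
        vandermondePoly R (k + l) := by
  rw [shuffleNumerator, vandermondePoly_add, map_mul, map_mul]
  ring

lemma degreeOf_shuffleKernel_le [Nontrivial R] (c : R) (m : Fin (k + l)) :
    degreeOf m (shuffleKernel k l c) ≤ ∑ i : Fin k, ∑ j : Fin l,
      ((if m = Fin.natAdd k j then 1 else 0) + if m = Fin.castAdd l i then 1 else 0) :=
  (degreeOf_prod_le _ _ _).trans <| sum_le_sum fun i _ =>
    (degreeOf_prod_le _ _ _).trans <| sum_le_sum fun j _ =>
      (degreeOf_X_sub_X_sub_C (castAdd_ne_natAdd i j).symm c m).le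

lemma degreeOf_castAdd_shuffleKernel_le [Nontrivial R] (c : R) (i : Fin k) :
    degreeOf (Fin.castAdd l i) (shuffleKernel k l c) ≤ l :=
  (degreeOf_shuffleKernel_le c _).trans_eq <| by
    simp [castAdd_ne_natAdd, castAdd_inj.eq_iff]

lemma degreeOf_natAdd_shuffleKernel_le [Nontrivial R] (c : R) (j : Fin l) :
    degreeOf (Fin.natAdd k j) (shuffleKernel k l c) ≤ k :=
  (degreeOf_shuffleKernel_le c _).trans_eq <| by
    simp [(castAdd_ne_natAdd _ _).symm, natAdd_inj.eq_iff]

variable [IsDomain R]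

lemma shuffleKernel_zero_ne_zero : shuffleKernel k l (0 : R) ≠ 0 :=
  right_ne_zero_of_mul (vandermondePoly_add (R := R) (k := k) ▸ vandermondePoly_ne_zero)

lemma degreeOf_vandermondePoly_mul_le {n : ℕ} (p : MvPolynomial (Fin n) R) (m : Fin n) :
    degreeOf m (vandermondePoly R n * p) ≤ n - 1 + degreeOf m p :=
  degreeOf_vandermondePoly (R := R) m ▸ degreeOf_mul_le m _ p

lemma degreeOf_shuffleNumerator_le (c : R) {d : ℕ} {f : MvPolynomial (Fin k) R}
    {g : MvPolynomial (Fin l) R} (hf : ∀ i, degreeOf i f ≤ d) (hg : ∀ j, degreeOf j g ≤ d)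
    (m : Fin (k + l)) : degreeOf m (shuffleNumerator c f g) ≤ k + l - 1 + d := by
  refine ((degreeOf_mul_le _ _ _).trans (Nat.add_le_add_right (degreeOf_mul_le _ _ _) _)).trans ?_
  induction m using Fin.addCases with
  | left i =>
    rw [degreeOf_rename_of_injective castAdd_inj,
      degreeOf_rename_of_notMem_range (by simp [(castAdd_ne_natAdd _ _).symm])]
    have := degreeOf_castAdd_shuffleKernel_le (l := l) c i
    have := degreeOf_vandermondePoly_mul_le f i
    have := hf i
    have := i.pos
    omega
  | right j =>
    rw [degreeOf_rename_of_injective natAdd_inj,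
      degreeOf_rename_of_notMem_range (by simp [castAdd_ne_natAdd])]
    have := degreeOf_natAdd_shuffleKernel_le (k := k) c j
    have := degreeOf_vandermondePoly_mul_le g j
    have := hg j
    have := j.pos
    omega

end ShuffleNumerator

section RationalFunctions

variable {k l : ℕ}

lemma embK_algebraMap {a b : ℕ} (e : Fin a → Fin b) (he : Function.Injective e)
    (p : MvPolynomial (Fin a) ℂ) :
    embK e he (algebraMap _ _ p) = algebraMap _ _ (rename e p) :=
  IsFractionRing.lift_algebraMap _ p

lemma prod_Yv_weight_eq (κ : ℂ) (σ : Equiv.Perm (Fin (k + l))) :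
    ∏ i : Fin k, ∏ j : Fin l,
        ((Yv (σ (Fin.castAdd l i)) - Yv (σ (Fin.natAdd k j)) +
            algebraMap (MvPolynomial (Fin (k + l)) ℂ) (RatField (k + l)) (C κ)) /
          (Yv (σ (Fin.castAdd l i)) - Yv (σ (Fin.natAdd k j)))) =
      algebraMap _ (RatField (k + l)) (rename σ (shuffleKernel k l κ)) /
        algebraMap _ (RatField (k + l)) (rename σ (shuffleKernel k l (0 : ℂ))) := by
  simp only [shuffleKernel, map_prod]
  simp only [← prod_div_distrib]
  refine prod_congr rfl fun i _ => prod_congr rfl fun j _ => ?_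
  rw [← neg_div_neg_eq]
  simp only [Yv, map_sub, rename_X, rename_C, map_zero, sub_zero]
  ring

lemma prod_Yv_weight_mul_embK_mul_embK (κ : ℂ) (f : MvPolynomial (Fin k) ℂ)
    (g : MvPolynomial (Fin l) ℂ) (σ : Equiv.Perm (Fin (k + l))) :
    (∏ i : Fin k, ∏ j : Fin l,
        ((Yv (σ (Fin.castAdd l i)) - Yv (σ (Fin.natAdd k j)) +
            algebraMap (MvPolynomial (Fin (k + l)) ℂ) (RatField (k + l)) (C κ)) /
          (Yv (σ (Fin.castAdd l i)) - Yv (σ (Fin.natAdd k j))))) *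
        embK (fun i => σ (Fin.castAdd l i)) (σ.injective.comp castAdd_inj)
          (algebraMap _ (RatField k) f) *
        embK (fun j => σ (Fin.natAdd k j)) (σ.injective.comp natAdd_inj)
          (algebraMap _ (RatField l) g) =
      algebraMap _ (RatField (k + l)) (Equiv.Perm.sign σ • rename σ (shuffleNumerator κ f g)) /
        algebraMap _ (RatField (k + l)) (vandermondePoly ℂ (k + l)) := by
  have hinj := IsFractionRing.injective (MvPolynomial (Fin (k + l)) ℂ) (RatField (k + l))
  have hker : rename σ (shuffleKernel k l (0 : ℂ)) ≠ 0 :=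
    (map_ne_zero_iff _ (rename_injective σ σ.injective)).mpr shuffleKernel_zero_ne_zero
  rw [prod_Yv_weight_eq, embK_algebraMap, embK_algebraMap, div_mul_eq_mul_div, div_mul_eq_mul_div,
    div_eq_div_iff ((map_ne_zero_iff _ hinj).mpr hker)
      ((map_ne_zero_iff _ hinj).mpr vandermondePoly_ne_zero)]
  simp only [← map_mul]
  congr 1
  calc rename σ (shuffleKernel k l κ) * rename (σ ∘ Fin.castAdd l) f *
        rename (σ ∘ Fin.natAdd k) g * vandermondePoly ℂ (k + l)
      = Equiv.Perm.sign σ • rename σ (shuffleKernel k l κ * rename (Fin.castAdd l) f *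
          rename (Fin.natAdd k) g * vandermondePoly ℂ (k + l)) := by
        rw [map_mul, isAlternatingPoly_vandermondePoly σ, mul_smul_comm, smul_smul,
          Int.units_mul_self, one_smul, map_mul, map_mul, rename_rename, rename_rename]
    _ = Equiv.Perm.sign σ • rename σ (shuffleNumerator κ f g) *
          rename σ (shuffleKernel k l 0) := by
        rw [← shuffleNumerator_mul_shuffleKernel_zero, map_mul, smul_mul_assoc]

lemma shuffle_algebraMap (κ : ℂ) (f : MvPolynomial (Fin k) ℂ) (g : MvPolynomial (Fin l) ℂ) :
    shuffle κ (algebraMap _ (RatField k) f) (algebraMap _ (RatField l) g) =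
      ((k.factorial * l.factorial : ℕ) : RatField (k + l))⁻¹ *
        (algebraMap _ (RatField (k + l)) (antisymmetrize (shuffleNumerator κ f g)) /
          algebraMap _ (RatField (k + l)) (vandermondePoly ℂ (k + l))) := by
  rw [shuffle, antisymmetrize, map_sum, sum_div]
  exact congrArg _ (sum_congr rfl fun σ _ => prod_Yv_weight_mul_embK_mul_embK κ f g σ)

end RationalFunctions

theorem statement8_general (κ : ℂ) (N k l : ℕ)
    (f : MvPolynomial (Fin k) ℂ) (g : MvPolynomial (Fin l) ℂ)
    (hfdeg : ∀ i : Fin k, f.degreeOf i < N) (hgdeg : ∀ j : Fin l, g.degreeOf j < N) :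
    ∃ p : MvPolynomial (Fin (k + l)) ℂ,
      p.IsSymmetric ∧ (∀ i : Fin (k + l), p.degreeOf i < N) ∧
      shuffle κ (algebraMap (MvPolynomial (Fin k) ℂ) (RatField k) f)
          (algebraMap (MvPolynomial (Fin l) ℂ) (RatField l) g) =
        algebraMap (MvPolynomial (Fin (k + l)) ℂ) (RatField (k + l)) p := by
  obtain ⟨s, hs, heq⟩ :=
    (isAlternatingPoly_antisymmetrize (shuffleNumerator κ f g)).exists_eq_vandermondePoly_mul
  have hsdeg (m : Fin (k + l)) : degreeOf m s ≤ N - 1 := by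
    refine degreeOf_le_of_degreeOf_vandermondePoly_mul_le (heq ▸ degreeOf_antisymmetrize_le ?_ m)
    exact degreeOf_shuffleNumerator_le κ (fun i => Nat.le_sub_one_of_lt (hfdeg i))
      fun j => Nat.le_sub_one_of_lt (hgdeg j)
  have hNpos (m : Fin (k + l)) : 0 < N :=
    m.addCases (fun i => (hfdeg i).pos) fun j => (hgdeg j).pos
  have hV : algebraMap _ (RatField (k + l)) (vandermondePoly ℂ (k + l)) ≠ 0 :=
    (map_ne_zero_iff _ (IsFractionRing.injective _ _)).mpr vandermondePoly_ne_zero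
  refine ⟨((k.factorial * l.factorial : ℕ) : ℂ)⁻¹ • s, fun σ => ?_, fun m => ?_, ?_⟩
  · rw [map_smul, hs σ]
  · rw [smul_eq_C_mul]
    exact (degreeOf_C_mul_le _ _ _).trans_lt (Nat.lt_of_le_sub_one (hNpos m) (hsdeg m))
  · rw [shuffle_algebraMap, heq, map_mul, mul_div_cancel_left₀ _ hV, Algebra.smul_def, map_mul,
      ← IsScalarTower.algebraMap_apply, map_inv₀, map_natCast]

/-- The Feigin–Odesskii shuffle product preserves the degree
truncation: if `f ∈ ℂ[Y₁,…,Y_k]^{S_k}` and `g ∈ ℂ[Y₁,…,Y_l]^{S_l}` each have degree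
strictly less than `N` in every variable, then `f *^κ g` is a symmetric polynomial in
`k + l` variables of degree strictly less than `N` in every variable. -/
theorem statement8 (κ : ℂ) (N k l : ℕ)
    (f : MvPolynomial (Fin k) ℂ) (g : MvPolynomial (Fin l) ℂ)
    (hf : f.IsSymmetric) (hg : g.IsSymmetric)
    (hfdeg : ∀ i : Fin k, f.degreeOf i < N) (hgdeg : ∀ j : Fin l, g.degreeOf j < N) :
    ∃ p : MvPolynomial (Fin (k + l)) ℂ,
      p.IsSymmetric ∧ (∀ i : Fin (k + l), p.degreeOf i < N) ∧
      shuffle κ (algebraMap (MvPolynomial (Fin k) ℂ) (RatField k) f)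
          (algebraMap (MvPolynomial (Fin l) ℂ) (RatField l) g) =
        algebraMap (MvPolynomial (Fin (k + l)) ℂ) (RatField (k + l)) p :=
  statement8_general κ N k l f g hfdeg hgdeg
end

section
/- The deformed power sums p_1^ℏ, ..., p_k^ℏ freely generate the algebra of symmetric polynomials: ℂ[ℏ][Ω_1,...,Ω_k]^{S_k} = ℂ[ℏ][p_1^ℏ(Ω⃗), ..., p_k^ℏ(Ω⃗)] as a polynomial ring over ℂ[ℏ]. -/
set_option synthInstance.maxHeartbeats 1000000
set_option maxHeartbeats 1000000

open MvPolynomial Finset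

/-- The ring `ℂ[ℏ][Ω_1,…,Ω_k]` of polynomials in `Ω_1,…,Ω_k` over `ℂ[ℏ]`. -/
abbrev SymRing (k : ℕ) : Type := MvPolynomial (Fin k) (Polynomial ℂ)

/-- Its field of fractions. -/
abbrev SymField (k : ℕ) : Type := FractionRing (SymRing k)

/-- The variable `Ω i`, in the fraction field. -/
noncomputable def Om {k : ℕ} (i : Fin k) : SymField k :=
  algebraMap (SymRing k) (SymField k) (X i)

/-- The parameter `ℏ`, in the fraction field. -/
noncomputable def hb {k : ℕ} : SymField k :=
  algebraMap (SymRing k) (SymField k) (C Polynomial.X)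

/-!
The residues at `u = Ω_i` give the partial fraction expansion of `∏ i, (u - Ω_i + ℏ) / (u - Ω_i)`,
and expanding it at `u = ∞`, in powers of `X = u⁻¹`, turns it into the identity
`∏ i, (1 + ℏ X - Ω_i X) = (∏ i, (1 - Ω_i X)) * (1 + ℏ X * ∑ a, p_a X ^ a)`. Writing both products
through the elementary symmetric polynomials `e_j` and cancelling `ℏ X` leaves a recursion over the
symmetric polynomials, in which `e_j` is accompanied by `((1 + ℏ X) ^ (k - j) - 1) / (ℏ X)`. It
shows that every `p_a` is symmetric, and comparing coefficients of `X ^ a` gives a deformed Newton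
identity expressing `a * e_a` through `p_1, …, p_a` and `e_0, …, e_{a-1}`. Once `k!` is invertible,
`p_1, …, p_k` therefore generate, and being as many as the transcendence degree of the algebra they
are algebraically independent.
-/

open scoped PowerSeries

section PartialFractions

variable {ι K : Type*} [Fintype ι] [DecidableEq ι] [Field K]

/-- The residue of `h⁻¹ ∏ j, (u - x j + h) / (u - x j)` at its pole `u = x i`, written in the form
that makes sense for `h = 0` as well. -/
def deformedResidue (x : ι → K) (h : K) (i : ι) : K :=
  ∏ j ∈ univ.erase i, ((x i - x j + h) / (x i - x j))

theorem map_deformedResidue {L : Type*} [Field L] (f : K →+* L) (x : ι → K) (h : K) (i : ι) :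
    deformedResidue (f ∘ x) (f h) i = f (deformedResidue x h i) := by
  simp [deformedResidue]

theorem prod_sub_add_div_sub_eq {x : ι → K} (hx : Function.Injective x) (h : K) {y : K}
    (hy : ∀ i, y ≠ x i) :
    ∏ i, ((y - x i + h) / (y - x i)) = 1 + h * ∑ i, deformedResidue x h i / (y - x i) := by
  set N := Lagrange.nodal univ x
  have hN : N.eval y ≠ 0 := by
    simpa [N, Lagrange.eval_nodal, prod_ne_zero_iff, sub_eq_zero] using hy
  have hdeg : (Polynomial.taylor h N - N).degree < #(univ : Finset ι) := by
    have hN0 : N ≠ 0 := Lagrange.nodal_ne_zero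
    rw [← Lagrange.degree_nodal (s := univ) (v := x), ← Polynomial.degree_taylor N h]
    exact Polynomial.degree_sub_lt_left (by simp) (by simpa using hN0) (by simp)
  have hnode : ∀ i ∈ univ, (Polynomial.taylor h N - N).eval (x i) =
      h * ∏ j ∈ univ.erase i, (x i - x j + h) := by
    intro i hi
    simp only [N, Polynomial.eval_sub, Polynomial.taylor_eval, Lagrange.eval_nodal_at_node hi,
      sub_zero, Lagrange.eval_nodal, add_sub_right_comm, ← mul_prod_erase univ _ hi, sub_self,
      zero_add]
  have hinterp := congrArg (Polynomial.eval y)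
    (Lagrange.eq_interpolate_of_eval_eq _ hx.injOn hdeg hnode)
  rw [Lagrange.eval_interpolate_not_at_node _ fun i _ ↦ hy i, Polynomial.eval_sub,
    Polynomial.taylor_eval, sub_eq_iff_eq_add'] at hinterp
  calc ∏ i, ((y - x i + h) / (y - x i)) = N.eval (y + h) / N.eval y := by
        simp only [N, Lagrange.eval_nodal, prod_div_distrib, add_sub_right_comm]
    _ = 1 + h * ∑ i, deformedResidue x h i / (y - x i) := by
        rw [hinterp, add_div, div_self hN, mul_div_cancel_left₀ _ hN, mul_sum]
        congr 1
        refine sum_congr rfl fun i _ ↦ ?_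
        rw [deformedResidue, prod_div_distrib, Lagrange.nodalWeight, prod_inv_distrib]
        ring

end PartialFractions

section GeometricSeries

variable {R : Type*} [CommRing R]

theorem one_sub_C_mul_X_mul_mk_pow (r : R) :
    (1 - PowerSeries.C r * PowerSeries.X) * PowerSeries.mk (r ^ ·) = 1 := by
  ext m
  rcases m with _ | m
  · simp
  · simp [sub_mul, mul_assoc, PowerSeries.coeff_succ_X_mul, pow_succ', PowerSeries.coeff_one]

/-- The power series `((1 + h X) ^ m - 1) / (h X)`, which is a polynomial in `h` and `X`. -/
noncomputable def shiftQuotient (h : R) (m : ℕ) : R⟦X⟧ :=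
  ∑ i ∈ range m, (1 + PowerSeries.C h * PowerSeries.X) ^ i

variable (h : R) (m : ℕ)

theorem C_mul_X_mul_shiftQuotient :
    PowerSeries.C h * PowerSeries.X * shiftQuotient h m =
      (1 + PowerSeries.C h * PowerSeries.X) ^ m - 1 := by
  rw [← geom_sum_mul, shiftQuotient, add_sub_cancel_left, mul_comm]

theorem coeff_zero_shiftQuotient : PowerSeries.coeff 0 (shiftQuotient h m) = m := by
  simp [shiftQuotient]

end GeometricSeries

theorem prod_shifted_sub_C_mul_X {ι K : Type*} [Fintype ι] [DecidableEq ι] [Field K]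
    {x : ι → K} (hx : Function.Injective x) (h : K) :
    ∏ i, (1 + PowerSeries.C h * PowerSeries.X - PowerSeries.C (x i) * PowerSeries.X) =
      (∏ i, (1 - PowerSeries.C (x i) * PowerSeries.X)) *
        (1 + PowerSeries.C h * PowerSeries.X *
          ∑ i, PowerSeries.C (deformedResidue x h i) * PowerSeries.mk (x i ^ ·)) := by
  let f := algebraMap K⟦X⟧ (FractionRing K⟦X⟧)
  have hf : Function.Injective f := IsFractionRing.injective _ _
  let c := f.comp PowerSeries.C
  let t := f PowerSeries.X
  have ht : t ≠ 0 := (map_ne_zero_iff f hf).2 PowerSeries.X_ne_zero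
  have hgeom : ∀ i, (1 - c (x i) * t) * f (PowerSeries.mk (x i ^ ·)) = 1 := fun i ↦ by
    simpa [c, t] using congrArg f (one_sub_C_mul_X_mul_mk_pow (x i))
  have hne : ∀ i, 1 - c (x i) * t ≠ 0 := fun i ↦ left_ne_zero_of_mul_eq_one (hgeom i)
  have hpole : ∀ i, t⁻¹ - c (x i) = (1 - c (x i) * t) / t := fun i ↦ by field_simp
  have hy : ∀ i, t⁻¹ ≠ (c ∘ x) i := fun i ↦
    sub_ne_zero.1 (hpole i ▸ div_ne_zero (hne i) ht)
  have hres := prod_sub_add_div_sub_eq (c.injective.comp hx) (c h) hy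
  simp only [map_deformedResidue, Function.comp_apply, hpole] at hres
  have hfactor : ∀ i, ((1 - c (x i) * t) / t + c h) / ((1 - c (x i) * t) / t) =
      (1 + c h * t - c (x i) * t) / (1 - c (x i) * t) := fun i ↦ by
    have := hne i
    field_simp
    ring
  have hterm : ∀ i, c (deformedResidue x h i) / ((1 - c (x i) * t) / t) =
      t * (c (deformedResidue x h i) * f (PowerSeries.mk (x i ^ ·))) := fun i ↦ by
    rw [eq_inv_of_mul_eq_one_right (hgeom i)]
    field_simp
  simp only [hfactor, hterm, ← mul_sum, prod_div_distrib] at hres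
  rw [div_eq_iff (prod_ne_zero_iff.2 fun i _ ↦ hne i)] at hres
  apply hf
  simpa [c, t, mul_comm, mul_assoc, mul_left_comm] using hres

theorem prod_sub_mul_eq_sum_esymm {ι A : Type*} [Fintype ι] [CommRing A] (x : ι → A) (y t : A) :
    ∏ i, (y - x i * t) =
      ∑ j ∈ range (Fintype.card ι + 1),
        (-1) ^ j * (univ.val.map x).esymm j * t ^ j * y ^ (Fintype.card ι - j) := by
  have hvieta := congrArg (Polynomial.eval y)
    (Multiset.prod_X_sub_X_eq_sum_esymm ((univ.val.map x).map (t • ·)))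
  have hscale (j : ℕ) :
      ((univ.val.map x).map (t • ·)).esymm j = t ^ j * (univ.val.map x).esymm j :=
    (Multiset.pow_smul_esymm t j _).symm
  simp only [hscale] at hvieta
  simp only [Polynomial.eval_multiset_prod, Polynomial.eval_finsetSum, Multiset.map_map,
    Multiset.card_map] at hvieta
  simpa [mul_comm t, mul_assoc, mul_left_comm (t ^ _)] using hvieta

theorem algebraicIndependent_of_adjoin_range_eq_top {ι R A : Type*} [Finite ι] [CommRing R]
    [CommRing A] [IsDomain A] [Algebra R A] {x y : ι → A} (hy : IsTranscendenceBasis R y)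
    (hx : Algebra.adjoin R (Set.range x) = ⊤) : AlgebraicIndependent R x := by
  have := (algebraMap R A).domain_nontrivial
  have := (faithfulSMul_iff_algebraMap_injective R A).2 hy.1.algebraMap_injective
  have : Algebra.IsAlgebraic (Algebra.adjoin R (Set.range x)) A :=
    ⟨fun a ↦ isAlgebraic_algebraMap (⟨a, hx ▸ Algebra.mem_top⟩ : Algebra.adjoin R (Set.range x))⟩
  exact (Algebra.IsAlgebraic.isTranscendenceBasis_of_lift_le_trdeg_of_finite R x
    hy.lift_cardinalMk_eq_trdeg.le).1

section DeformedPsum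

variable {σ R : Type*} [Fintype σ] [CommRing R]

variable (σ R) in
/-- The elementary symmetric polynomial `e_j` as an element of the algebra of symmetric
polynomials. -/
noncomputable def symmEsymm (j : ℕ) : symmetricSubalgebra σ R :=
  ⟨esymm σ R j, esymm_isSymmetric σ R j⟩

variable (σ R) in
theorem symmEsymm_zero : symmEsymm σ R 0 = 1 :=
  Subtype.ext (esymm_zero σ R)

/-- For a sequence of power series `f`, the sum `∑ j ≤ k, (-1) ^ j e_j X ^ j f (k - j)`, where `k`
is the number of variables and `e_j` the elementary symmetric polynomials. For `f m = y ^ m` it is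
the product `∏ i, (y - Ω_i X)`. The coefficients are taken in the algebra of symmetric polynomials,
so that every polynomial read off from such series is symmetric. -/
noncomputable def alternatingEsymmSum (f : ℕ → (symmetricSubalgebra σ R)⟦X⟧) :
    (symmetricSubalgebra σ R)⟦X⟧ :=
  ∑ j ∈ range (Fintype.card σ + 1),
    PowerSeries.C ((-1) ^ j * symmEsymm σ R j) *
      (PowerSeries.X ^ j * f (Fintype.card σ - j))

theorem alternatingEsymmSum_add (f g : ℕ → (symmetricSubalgebra σ R)⟦X⟧) :
    (alternatingEsymmSum fun m ↦ f m + g m) = alternatingEsymmSum f + alternatingEsymmSum g := by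
  simp only [alternatingEsymmSum, mul_add, sum_add_distrib]

theorem alternatingEsymmSum_mul (f : ℕ → (symmetricSubalgebra σ R)⟦X⟧)
    (g : (symmetricSubalgebra σ R)⟦X⟧) :
    alternatingEsymmSum f * g = alternatingEsymmSum fun m ↦ f m * g := by
  simp only [alternatingEsymmSum, sum_mul, mul_assoc]

theorem coeff_alternatingEsymmSum (f : ℕ → (symmetricSubalgebra σ R)⟦X⟧) {a : ℕ}
    (ha : a ≤ Fintype.card σ) :
    PowerSeries.coeff a (alternatingEsymmSum f) =
      ∑ j ∈ range (a + 1), (-1) ^ j * symmEsymm σ R j *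
        PowerSeries.coeff (a - j) (f (Fintype.card σ - j)) := by
  simp only [alternatingEsymmSum, map_sum, PowerSeries.coeff_C_mul, PowerSeries.coeff_X_pow_mul']
  symm
  refine sum_subset_zero_on_sdiff (range_mono (by lia)) (fun j hj ↦ ?_) fun j hj ↦ ?_
  · rw [if_neg (by grind), mul_zero]
  · rw [if_pos (by grind)]

theorem constantCoeff_alternatingEsymmSum (f : ℕ → (symmetricSubalgebra σ R)⟦X⟧) :
    PowerSeries.constantCoeff (alternatingEsymmSum f) =
      PowerSeries.constantCoeff (f (Fintype.card σ)) := by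
  simpa [symmEsymm_zero] using coeff_alternatingEsymmSum f (Nat.zero_le _)

theorem map_alternatingEsymmSum_pow {A : Type*} [CommRing A] (φ : symmetricSubalgebra σ R →+* A)
    {x : σ → A} (hφ : ∀ j, φ (symmEsymm σ R j) = (univ.val.map x).esymm j)
    (y : (symmetricSubalgebra σ R)⟦X⟧) :
    (alternatingEsymmSum fun m ↦ y ^ m).map φ =
      ∏ i, (y.map φ - PowerSeries.C (x i) * PowerSeries.X) := by
  have hesymm (j : ℕ) : (univ.val.map (PowerSeries.C ∘ x)).esymm j =
      PowerSeries.C (φ (symmEsymm σ R j)) := by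
    simp [hφ, esymm_map_val]
  have hprod := prod_sub_mul_eq_sum_esymm (PowerSeries.C ∘ x) (y.map φ) PowerSeries.X
  simp only [hesymm] at hprod
  simpa [alternatingEsymmSum, mul_assoc] using hprod.symm

variable (σ) (h : R)

/-- The generating series `∑ a, p_a X ^ a` of the deformed power sums, where `X` stands for `u⁻¹`.
It is the quotient by `h X` of `∏ i, (1 - Ω_i X + h X) / (1 - Ω_i X) - 1`, with the division carried
out in the numerator so that `h` may be any element of a commutative ring. -/
noncomputable def deformedPsumSeries : (symmetricSubalgebra σ R)⟦X⟧ :=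
  alternatingEsymmSum (fun m ↦ (shiftQuotient h m).map (algebraMap R _)) *
    PowerSeries.invOfUnit (alternatingEsymmSum 1) 1

/-- The deformed power sum `p_a`, as an element of the algebra of symmetric polynomials. -/
noncomputable def deformedPsum (a : ℕ) : symmetricSubalgebra σ R :=
  PowerSeries.coeff a (deformedPsumSeries σ h)

theorem alternatingEsymmSum_deformedPsumSeries :
    alternatingEsymmSum (fun _ ↦ deformedPsumSeries σ h) =
      alternatingEsymmSum fun m ↦ (shiftQuotient h m).map (algebraMap R _) := by
  have hunit := PowerSeries.mul_invOfUnit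
    (alternatingEsymmSum (1 : ℕ → (symmetricSubalgebra σ R)⟦X⟧)) 1
    (by simp [constantCoeff_alternatingEsymmSum])
  calc alternatingEsymmSum (fun _ ↦ deformedPsumSeries σ h) =
      alternatingEsymmSum 1 * deformedPsumSeries σ h := by simp [alternatingEsymmSum_mul]
    _ = _ := by rw [deformedPsumSeries, mul_left_comm, hunit, mul_one]

theorem alternatingEsymmSum_one_mul_one_add_deformedPsumSeries :
    alternatingEsymmSum (fun m ↦ 1 ^ m) *
        (1 + PowerSeries.C (algebraMap R _ h) * PowerSeries.X * deformedPsumSeries σ h) =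
      alternatingEsymmSum fun m ↦
        (1 + PowerSeries.C (algebraMap R _ h) * PowerSeries.X) ^ m := by
  have hshift (m : ℕ) : (1 + PowerSeries.C (algebraMap R (symmetricSubalgebra σ R) h) *
      PowerSeries.X) ^ m = 1 ^ m + (shiftQuotient h m).map (algebraMap R _) *
        (PowerSeries.C (algebraMap R _ h) * PowerSeries.X) := by
    have hmap := congrArg (PowerSeries.map (algebraMap R (symmetricSubalgebra σ R)))
      (C_mul_X_mul_shiftQuotient h m)
    simp only [map_mul, map_sub, map_pow, map_add, map_one, PowerSeries.map_C,
      PowerSeries.map_X] at hmap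
    rw [one_pow]
    linear_combination -hmap
  calc alternatingEsymmSum (fun m ↦ 1 ^ m) *
        (1 + PowerSeries.C (algebraMap R _ h) * PowerSeries.X * deformedPsumSeries σ h) =
      alternatingEsymmSum (fun m ↦ 1 ^ m) +
        alternatingEsymmSum (fun m ↦ 1 ^ m * deformedPsumSeries σ h) *
          (PowerSeries.C (algebraMap R _ h) * PowerSeries.X) := by
        rw [← alternatingEsymmSum_mul]
        ring
    _ = _ := by
        simp only [hshift, alternatingEsymmSum_add, ← alternatingEsymmSum_mul,
          ← alternatingEsymmSum_deformedPsumSeries, one_pow, one_mul]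

variable {σ h}

theorem map_deformedPsum {K : Type*} [Field K] [DecidableEq σ]
    (φ : symmetricSubalgebra σ R →+* K) {x : σ → K} (hx : Function.Injective x)
    (hφ : ∀ j, φ (symmEsymm σ R j) = (univ.val.map x).esymm j)
    (hh : φ (algebraMap R _ h) ≠ 0) (a : ℕ) :
    φ (deformedPsum σ h a) = ∑ i, x i ^ a * deformedResidue x (φ (algebraMap R _ h)) i := by
  have hden : ∏ i, (1 - PowerSeries.C (x i) * PowerSeries.X) ≠ 0 :=
    prod_ne_zero_iff.2 fun i _ ↦ left_ne_zero_of_mul_eq_one (one_sub_C_mul_X_mul_mk_pow (x i))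
  have hhX : PowerSeries.C (φ (algebraMap R _ h)) * PowerSeries.X ≠ 0 :=
    mul_ne_zero (by simpa using hh) PowerSeries.X_ne_zero
  have hgen := congrArg (PowerSeries.map φ)
    (alternatingEsymmSum_one_mul_one_add_deformedPsumSeries σ h)
  simp only [map_mul, map_alternatingEsymmSum_pow φ hφ, map_add, map_one, PowerSeries.map_C,
    PowerSeries.map_X, prod_shifted_sub_C_mul_X hx] at hgen
  have hseries := mul_left_cancel₀ hhX (add_left_cancel (mul_left_cancel₀ hden hgen))
  simpa [deformedPsum, mul_comm] using congrArg (PowerSeries.coeff a) hseries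

theorem algebraMap_deformedPsum {K : Type*} [Field K] [Algebra (MvPolynomial σ R) K]
    [FaithfulSMul (MvPolynomial σ R) K] [DecidableEq σ] (hh : h ≠ 0) (a : ℕ) :
    algebraMap (MvPolynomial σ R) K (deformedPsum σ h a) =
      ∑ i, algebraMap (MvPolynomial σ R) K (X i) ^ a *
        deformedResidue (fun i ↦ algebraMap (MvPolynomial σ R) K (X i))
          (algebraMap (MvPolynomial σ R) K (C h)) i := by
  have := nontrivial_of_ne h 0 hh
  have hinj := FaithfulSMul.algebraMap_injective (MvPolynomial σ R) K
  let φ := (algebraMap (MvPolynomial σ R) K).comp (symmetricSubalgebra σ R).val.toRingHom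
  refine map_deformedPsum φ (hinj.comp (X_injective (R := R))) (fun j ↦ ?_) ?_ a
  · simp [φ, symmEsymm, esymm, esymm_map_val]
  · exact (map_ne_zero_iff _ hinj).2 (C_eq_zero.not.2 hh)

theorem neg_one_pow_mul_natCast_mul_symmEsymm {a : ℕ} (ha : a ≤ Fintype.card σ) :
    (-1) ^ a * (a * symmEsymm σ R a) =
      ∑ j ∈ range a, (-1) ^ j * symmEsymm σ R j *
        (algebraMap R _ (PowerSeries.coeff (a - j) (shiftQuotient h (Fintype.card σ - j))) -
          deformedPsum σ h (a - j)) := by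
  have newton {b : ℕ} (hb : b ≤ Fintype.card σ) :
      ∑ j ∈ range (b + 1), (-1) ^ j * symmEsymm σ R j *
        (algebraMap R _ (PowerSeries.coeff (b - j) (shiftQuotient h (Fintype.card σ - j))) -
          deformedPsum σ h (b - j)) = 0 := by
    have := congrArg (PowerSeries.coeff b) (alternatingEsymmSum_deformedPsumSeries σ h)
    rw [coeff_alternatingEsymmSum _ hb, coeff_alternatingEsymmSum _ hb] at this
    simpa [deformedPsum, mul_sub, sub_eq_zero] using this.symm
  have hzero : (Fintype.card σ : symmetricSubalgebra σ R) = deformedPsum σ h 0 := by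
    simpa [symmEsymm_zero, coeff_zero_shiftQuotient, sub_eq_zero] using newton (Nat.zero_le _)
  have hsum := newton ha
  rw [sum_range_succ, Nat.sub_self, ← hzero, coeff_zero_shiftQuotient, map_natCast,
    Nat.cast_sub ha] at hsum
  linear_combination -hsum

theorem symmEsymm_mem_of_deformedPsum_mem {n : ℕ} (hn : n ≤ Fintype.card σ)
    (hunit : IsUnit (n.factorial : R)) {B : Subalgebra R (symmetricSubalgebra σ R)}
    (hB : ∀ a, 0 < a → a ≤ n → deformedPsum σ h a ∈ B) {a : ℕ} (ha : a ≤ n) :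
    symmEsymm σ R a ∈ B := by
  induction a using Nat.strong_induction_on with
  | _ a ih =>
    obtain rfl | hpos := a.eq_zero_or_pos
    · exact symmEsymm_zero σ R ▸ one_mem B
    have hmul : (-1) ^ a * (a * symmEsymm σ R a) ∈ B := by
      rw [neg_one_pow_mul_natCast_mul_symmEsymm (h := h) (ha.trans hn)]
      refine sum_mem fun j hj ↦ mul_mem (mul_mem ?_ ?_) (sub_mem (B.algebraMap_mem _) ?_)
      · exact pow_mem (neg_mem (one_mem B)) j
      · exact ih j (mem_range.1 hj) (by grind)
      · exact hB _ (by grind) (by grind)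
    obtain ⟨u, hu⟩ : IsUnit ((-1) ^ a * (a : R)) :=
      (isUnit_one.neg.pow a).mul
        (isUnit_of_dvd_unit (Nat.cast_dvd_cast (Nat.dvd_factorial hpos ha)) hunit)
    have hsmul : (u : R) • symmEsymm σ R a ∈ B := by
      simpa [hu, Algebra.smul_def, mul_assoc] using hmul
    simpa [smul_smul] using B.smul_mem hsmul (↑u⁻¹ : R)

theorem adjoin_range_deformedPsum {n : ℕ} (hn : Fintype.card σ = n)
    (hunit : IsUnit (n.factorial : R)) :
    Algebra.adjoin R (Set.range fun a : Fin n ↦ deformedPsum σ h (a + 1)) = ⊤ := by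
  have hesymm : Algebra.adjoin R (Set.range fun i : Fin n ↦ symmEsymm σ R (i + 1)) = ⊤ := by
    rw [Algebra.adjoin_range_eq_range_aeval, AlgHom.range_eq_top]
    exact esymmAlgHom_surjective R hn.le
  rw [← top_le_iff, ← hesymm, Algebra.adjoin_le_iff]
  rintro _ ⟨i, rfl⟩
  refine symmEsymm_mem_of_deformedPsum_mem (h := h) hn.ge hunit (fun a hpos ha ↦ ?_) i.2
  exact Algebra.subset_adjoin ⟨⟨a - 1, by lia⟩, by simp [Nat.sub_add_cancel hpos]⟩

theorem algebraicIndependent_deformedPsum [IsDomain R] {n : ℕ} (hn : Fintype.card σ = n)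
    (hunit : IsUnit (n.factorial : R)) :
    AlgebraicIndependent R fun a : Fin n ↦ deformedPsum σ h (a + 1) :=
  algebraicIndependent_of_adjoin_range_eq_top
    ((esymmAlgEquiv σ R hn).isTranscendenceBasis (.mvPolynomial _ R))
    (adjoin_range_deformedPsum hn hunit)

end DeformedPsum

theorem statement14_general {σ R : Type*} [Fintype σ] [DecidableEq σ] [CommRing R] [IsDomain R]
    {n : ℕ} (hn : Fintype.card σ = n) (hunit : IsUnit (n.factorial : R)) {h : R} (hh : h ≠ 0) :
    ∃ P : Fin n → MvPolynomial σ R,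
      (∀ a, (P a).IsSymmetric) ∧
      (∀ a : Fin n,
        algebraMap (MvPolynomial σ R) (FractionRing (MvPolynomial σ R)) (P a) =
          ∑ i : σ, algebraMap _ _ (X i : MvPolynomial σ R) ^ ((a : ℕ) + 1) *
            deformedResidue (fun i ↦ algebraMap _ _ (X i : MvPolynomial σ R))
              (algebraMap _ _ (C h : MvPolynomial σ R)) i) ∧
      Function.Injective (aeval (R := R) P) ∧
      Set.range (aeval (R := R) P) = {f : MvPolynomial σ R | f.IsSymmetric} := by
  let p (a : Fin n) := deformedPsum σ h (a + 1)
  have hp : aeval (fun a ↦ (p a : MvPolynomial σ R)) =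
      (symmetricSubalgebra σ R).val.comp (aeval p) := by
    ext; simp
  refine ⟨fun a ↦ p a, fun a ↦ (p a).2, fun a ↦ ?_, ?_, ?_⟩
  · exact algebraMap_deformedPsum hh _
  · rw [hp]
    exact Subtype.val_injective.comp (algebraicIndependent_deformedPsum hn hunit)
  · have hsurj : Function.Surjective (aeval (R := R) p) := by
      rw [← AlgHom.range_eq_top, ← Algebra.adjoin_range_eq_range_aeval,
        adjoin_range_deformedPsum hn hunit]
    rw [hp, AlgHom.coe_comp, hsurj.range_comp]
    exact Subtype.range_coe

/-- The deformed power sums `p_1^ℏ, …, p_k^ℏ`, given by the closed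
formula `p_a^ℏ(Ω) = ∑_i Ω_i^a ∏_{j≠i} ((Ω_i − Ω_j + ℏ)/(Ω_i − Ω_j))` (a symmetric
polynomial in `Ω_1,…,Ω_k` over `ℂ[ℏ]`), freely generate the algebra of symmetric
polynomials: the `ℂ[ℏ]`-algebra map `ℂ[ℏ][x_1,…,x_k] → ℂ[ℏ][Ω_1,…,Ω_k]`,
`x_a ↦ p_a^ℏ`, is injective with range exactly the symmetric polynomials. -/
theorem statement14 (k : ℕ) :
    ∃ P : Fin k → SymRing k,
      (∀ a, (P a).IsSymmetric) ∧
      (∀ a : Fin k,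
        algebraMap (SymRing k) (SymField k) (P a) =
          ∑ i : Fin k, Om i ^ ((a : ℕ) + 1) *
            ∏ j ∈ Finset.univ.erase i, ((Om i - Om j + hb) / (Om i - Om j))) ∧
      Function.Injective (MvPolynomial.aeval (R := Polynomial ℂ) P) ∧
      Set.range (MvPolynomial.aeval (R := Polynomial ℂ) P) =
        {f : SymRing k | f.IsSymmetric} :=
  statement14_general (Fintype.card_fin k) (IsUnit.natCast_factorial_of_algebra ℂ k)
    Polynomial.X_ne_zero
end
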